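/- arXiv:2605.31369 — 2 statements merged into one kernel-verified Lean document; each statement's English description precedes it below -/
import Mathlib

section
/- Let μ and ν be probability measures on ℝ^d. Then, as an identity in [0, +∞], KL(μ‖ν) = sup over all bounded measurable functions φ : ℝ^d → ℝ of (∫ φ dμ − log ∫ e^{φ(y)} dν(y)) (Donsker–Varadhan representation); in particular, when μ is not absolutely continuous with respect to ν, both sides equal +∞. -/
open MeasureTheory
open scoped ENNReal Classical

/-- The Kullback–Leibler divergence `KL(μ‖ν) = ∫ log (dμ/dν) dμ`, with values in `[0, +∞]`:
it equals `+∞` when `μ` is not absolutely continuous with respect to `ν`, or when the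
log-likelihood ratio is not `μ`-integrable. -/
noncomputable def klDiv {α : Type*} [MeasurableSpace α] (μ ν : Measure α) : ℝ≥0∞ :=
  if μ ≪ ν ∧ Integrable (fun x => Real.log ((μ.rnDeriv ν x).toReal)) μ
  then ENNReal.ofReal (∫ x, Real.log ((μ.rnDeriv ν x).toReal) ∂μ)
  else ∞

/-!
The identity is Fenchel duality for `f(r) = r log r + 1 - r`. By the Fenchel–Young inequality
`r t - (exp t - 1) ≤ f(r)`, integrating against `ν` with `r = dμ/dν` and `t = φ x` gives
`∫ φ dμ - ∫ (exp φ - 1) dν ≤ KL(μ‖ν)`. Letting `φ` be truncations of `log (dμ/dν)`, the integrands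
on the left are nonnegative and converge to `f(dμ/dν)`, so Fatou's lemma gives the reverse
inequality for the supremum, whether or not the divergence is finite. If `μ` charges a `ν`-null set
`A`, then multiples of the indicator of `A` make the supremum infinite. Finally
`log z ≤ z - 1` bounds this functional by the Donsker–Varadhan one, with equality once `φ` is
shifted by a constant so that `∫ exp φ dν = 1`.
-/

open Filter Topology
open InformationTheory (klFun)

section RealFunctions

lemma mul_sub_exp_sub_one_le_klFun {r : ℝ} (hr : 0 ≤ r) (t : ℝ) :
    r * t - (Real.exp t - 1) ≤ klFun r := by
  rw [InformationTheory.klFun_apply]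
  rcases hr.eq_or_lt with rfl | hr
  · linarith [Real.exp_pos t]
  · have h_exp : Real.exp t = r * Real.exp (t - Real.log r) := by
      rw [Real.exp_sub, Real.exp_log hr, mul_div_cancel₀ _ hr.ne']
    have h_tangent : r * (t - Real.log r + 1) ≤ r * Real.exp (t - Real.log r) :=
      mul_le_mul_of_nonneg_left (Real.add_one_le_exp _) hr.le
    linarith

/-- For `0 ≤ a`, the truncation of `r` to the interval `[exp (-a), exp a]`. Its logarithm truncates
`log r` to `[-a, a]` and correctly takes the value `-a` at `r = 0`, where `Real.log` is `0`. -/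
noncomputable def expClamp (a r : ℝ) : ℝ := max (Real.exp (-a)) (min r (Real.exp a))

variable {a r : ℝ}

lemma expClamp_pos (a r : ℝ) : 0 < expClamp a r := lt_max_of_lt_left (Real.exp_pos _)

lemma measurable_expClamp (a : ℝ) : Measurable (expClamp a) :=
  measurable_const.max (measurable_id.min measurable_const)

lemma abs_log_expClamp_le (ha : 0 ≤ a) (r : ℝ) : |Real.log (expClamp a r)| ≤ a := by
  rw [abs_le, Real.le_log_iff_exp_le (expClamp_pos a r), Real.log_le_iff_le_exp (expClamp_pos a r)]
  exact ⟨le_max_left _ _, max_le (Real.exp_le_exp.2 (by linarith)) (min_le_right _ _)⟩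

lemma sub_mul_log_expClamp_nonneg (ha : 0 ≤ a) (r : ℝ) :
    0 ≤ (r - expClamp a r) * Real.log (expClamp a r) := by
  have h_exp : Real.exp (-a) ≤ Real.exp a := Real.exp_le_exp.2 (by linarith)
  rcases le_total r (Real.exp (-a)) with h_low | h_low
  · have h_eq : expClamp a r = Real.exp (-a) := max_eq_left ((min_le_left _ _).trans h_low)
    rw [h_eq, Real.log_exp]
    exact mul_nonneg_of_nonpos_of_nonpos (sub_nonpos.2 h_low) (neg_nonpos.2 ha)
  rcases le_total r (Real.exp a) with h_high | h_high
  · have h_eq : expClamp a r = r := by rw [expClamp, min_eq_left h_high, max_eq_right h_low]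
    simp [h_eq]
  · have h_eq : expClamp a r = Real.exp a := by
      rw [expClamp, min_eq_right h_high, max_eq_right h_exp]
    rw [h_eq, Real.log_exp]
    exact mul_nonneg (sub_nonneg.2 h_high) ha

lemma mul_log_expClamp_sub_nonneg (ha : 0 ≤ a) (r : ℝ) :
    0 ≤ r * Real.log (expClamp a r) - (expClamp a r - 1) := by
  have h_klFun := InformationTheory.klFun_nonneg (expClamp_pos a r).le
  rw [InformationTheory.klFun_apply] at h_klFun
  linarith [sub_mul_log_expClamp_nonneg ha r]

lemma tendsto_expClamp (hr : 0 ≤ r) : Tendsto (expClamp · r) atTop (𝓝 r) := by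
  have h_max : Tendsto (fun a ↦ max (Real.exp (-a)) r) atTop (𝓝 r) := by
    simpa [hr] using Real.tendsto_exp_neg_atTop_nhds_zero.max (tendsto_const_nhds (x := r))
  refine h_max.congr' ?_
  filter_upwards [Real.tendsto_exp_atTop.eventually_ge_atTop r] with a ha
  rw [expClamp, min_eq_left ha]

lemma tendsto_mul_log_expClamp_sub (hr : 0 ≤ r) :
    Tendsto (fun a ↦ r * Real.log (expClamp a r) - (expClamp a r - 1)) atTop (𝓝 (klFun r)) := by
  have h_clamp := tendsto_expClamp hr
  have h_log : Tendsto (fun a ↦ r * Real.log (expClamp a r)) atTop (𝓝 (r * Real.log r)) := by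
    rcases eq_or_ne r 0 with rfl | hr
    · simp
    · exact (h_clamp.log hr).const_mul r
  rw [InformationTheory.klFun_apply, add_sub_assoc, ← neg_sub r 1, ← sub_eq_add_neg]
  exact h_log.sub (h_clamp.sub_const 1)

end RealFunctions

section Duality

variable {α : Type*} [MeasurableSpace α] {μ ν : Measure α} {φ : α → ℝ}

lemma ofReal_integral_le_lintegral_ofReal (f : α → ℝ) :
    ENNReal.ofReal (∫ x, f x ∂μ) ≤ ∫⁻ x, ENNReal.ofReal (f x) ∂μ := by
  by_cases hf : Integrable f μ
  · rw [integral_eq_lintegral_pos_part_sub_lintegral_neg_part hf]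
    exact (ENNReal.ofReal_le_ofReal (sub_le_self _ ENNReal.toReal_nonneg)).trans
      ENNReal.ofReal_toReal_le
  · simp [integral_undef hf]

lemma integrable_exp_of_le [IsFiniteMeasure μ] (hφ : AEMeasurable φ μ) {b : ℝ}
    (hb : ∀ᵐ x ∂μ, φ x ≤ b) : Integrable (fun x ↦ Real.exp (φ x)) μ := by
  simpa using ProbabilityTheory.integrable_exp_mul_of_le 1 b zero_le_one hφ hb

/-- The functional of `φ` whose supremum over bounded measurable functions is the Kullback–Leibler
divergence of finite measures: the pairing of `φ` with `μ`, minus the convex conjugate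
`∫ (exp φ - 1) dν` of the divergence from `ν`. -/
noncomputable def klDual (μ ν : Measure α) (φ : α → ℝ) : ℝ :=
  ∫ x, φ x ∂μ - ∫ x, (Real.exp (φ x) - 1) ∂ν

lemma integrable_rnDeriv_mul_sub_exp_sub_one [SigmaFinite μ] [μ.HaveLebesgueDecomposition ν]
    (hμν : μ ≪ ν) (hφ : Integrable φ μ) (hexp : Integrable (fun x ↦ Real.exp (φ x) - 1) ν) :
    Integrable (fun x ↦ (μ.rnDeriv ν x).toReal * φ x - (Real.exp (φ x) - 1)) ν :=
  ((integrable_toReal_rnDeriv_mul_iff hμν).2 hφ).sub hexp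

lemma klDual_eq_integral [SigmaFinite μ] [μ.HaveLebesgueDecomposition ν]
    (hμν : μ ≪ ν) (hφ : Integrable φ μ) (hexp : Integrable (fun x ↦ Real.exp (φ x) - 1) ν) :
    klDual μ ν φ = ∫ x, ((μ.rnDeriv ν x).toReal * φ x - (Real.exp (φ x) - 1)) ∂ν := by
  rw [integral_sub ((integrable_toReal_rnDeriv_mul_iff hμν).2 hφ) hexp,
    integral_toReal_rnDeriv_mul hμν, klDual]

lemma ofReal_klDual_le_klDiv [IsFiniteMeasure μ] [IsFiniteMeasure ν]
    (hφ : Integrable φ μ) (hexp : Integrable (fun x ↦ Real.exp (φ x)) ν) :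
    ENNReal.ofReal (klDual μ ν φ) ≤ InformationTheory.klDiv μ ν := by
  by_cases hμν : μ ≪ ν
  · rw [klDual_eq_integral hμν hφ (hexp.sub (integrable_const 1)),
      InformationTheory.klDiv_eq_lintegral_klFun_of_ac hμν]
    exact (ofReal_integral_le_lintegral_ofReal _).trans <| lintegral_mono fun x ↦
      ENNReal.ofReal_le_ofReal (mul_sub_exp_sub_one_le_klFun ENNReal.toReal_nonneg _)
  · simp [InformationTheory.klDiv_of_not_ac hμν]

lemma ofReal_klDual_le_iSup (hφ : Measurable φ) (hbdd : ∃ C : ℝ, ∀ x, |φ x| ≤ C) :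
    ENNReal.ofReal (klDual μ ν φ) ≤
      ⨆ (φ : α → ℝ) (_ : Measurable φ) (_ : ∃ C : ℝ, ∀ x, |φ x| ≤ C),
        ENNReal.ofReal (klDual μ ν φ) :=
  le_iSup₂_of_le φ hφ (le_iSup_of_le hbdd le_rfl)

/-- The log-likelihood ratio of `μ` with respect to `ν` truncated to `[-a, a]`, equal to `-a` where
the density vanishes. -/
noncomputable def truncLLR (μ ν : Measure α) (a : ℝ) (x : α) : ℝ :=
  Real.log (expClamp a (μ.rnDeriv ν x).toReal)

lemma exp_truncLLR (μ ν : Measure α) (a : ℝ) (x : α) :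
    Real.exp (truncLLR μ ν a x) = expClamp a (μ.rnDeriv ν x).toReal :=
  Real.exp_log (expClamp_pos _ _)

lemma measurable_truncLLR (μ ν : Measure α) (a : ℝ) : Measurable (truncLLR μ ν a) :=
  ((measurable_expClamp a).comp (Measure.measurable_rnDeriv μ ν).ennreal_toReal).log

lemma abs_truncLLR_le (μ ν : Measure α) {a : ℝ} (ha : 0 ≤ a) (x : α) : |truncLLR μ ν a x| ≤ a :=
  abs_log_expClamp_le ha _

lemma mul_truncLLR_sub_nonneg (μ ν : Measure α) {a : ℝ} (ha : 0 ≤ a) (x : α) :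
    0 ≤ (μ.rnDeriv ν x).toReal * truncLLR μ ν a x - (Real.exp (truncLLR μ ν a x) - 1) := by
  rw [exp_truncLLR]
  exact mul_log_expClamp_sub_nonneg ha _

lemma tendsto_mul_truncLLR_sub (μ ν : Measure α) (x : α) :
    Tendsto (fun a ↦ (μ.rnDeriv ν x).toReal * truncLLR μ ν a x -
      (Real.exp (truncLLR μ ν a x) - 1)) atTop (𝓝 (klFun (μ.rnDeriv ν x).toReal)) := by
  simp only [exp_truncLLR]
  exact tendsto_mul_log_expClamp_sub ENNReal.toReal_nonneg

lemma lintegral_truncLLR_eq_klDual [IsFiniteMeasure μ] [IsFiniteMeasure ν] (hμν : μ ≪ ν) {a : ℝ}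
    (ha : 0 ≤ a) :
    ∫⁻ x, ENNReal.ofReal ((μ.rnDeriv ν x).toReal * truncLLR μ ν a x -
      (Real.exp (truncLLR μ ν a x) - 1)) ∂ν = ENNReal.ofReal (klDual μ ν (truncLLR μ ν a)) := by
  have h_meas := measurable_truncLLR μ ν a
  have h_bound := abs_truncLLR_le μ ν ha
  have h_int : Integrable (truncLLR μ ν a) μ :=
    .of_bound h_meas.aestronglyMeasurable a (ae_of_all _ h_bound)
  have h_exp : Integrable (fun x ↦ Real.exp (truncLLR μ ν a x) - 1) ν :=
    (integrable_exp_of_le h_meas.aemeasurable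
      (ae_of_all _ fun x ↦ le_of_abs_le (h_bound x))).sub (integrable_const 1)
  rw [klDual_eq_integral hμν h_int h_exp, ofReal_integral_eq_lintegral_ofReal
    (integrable_rnDeriv_mul_sub_exp_sub_one hμν h_int h_exp)
    (ae_of_all _ (mul_truncLLR_sub_nonneg μ ν ha))]

lemma klDiv_le_iSup_klDual_of_ac [IsFiniteMeasure μ] [IsFiniteMeasure ν] (hμν : μ ≪ ν) :
    InformationTheory.klDiv μ ν ≤ ⨆ (φ : α → ℝ) (_ : Measurable φ) (_ : ∃ C : ℝ, ∀ x, |φ x| ≤ C),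
      ENNReal.ofReal (klDual μ ν φ) := by
  set g : ℕ → α → ℝ := fun n x ↦ (μ.rnDeriv ν x).toReal * truncLLR μ ν n x -
    (Real.exp (truncLLR μ ν n x) - 1)
  have hg (n : ℕ) : Measurable (g n) :=
    ((Measure.measurable_rnDeriv μ ν).ennreal_toReal.mul (measurable_truncLLR μ ν n)).sub
      ((measurable_truncLLR μ ν n).exp.sub_const 1)
  have hg_tendsto (x : α) : Tendsto (fun n ↦ ENNReal.ofReal (g n x)) atTop
      (𝓝 (ENNReal.ofReal (klFun (μ.rnDeriv ν x).toReal))) :=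
    ENNReal.tendsto_ofReal ((tendsto_mul_truncLLR_sub μ ν x).comp tendsto_natCast_atTop_atTop)
  calc InformationTheory.klDiv μ ν
    _ = ∫⁻ x, ENNReal.ofReal (klFun (μ.rnDeriv ν x).toReal) ∂ν :=
      InformationTheory.klDiv_eq_lintegral_klFun_of_ac hμν
    _ = ∫⁻ x, liminf (fun n ↦ ENNReal.ofReal (g n x)) atTop ∂ν :=
      lintegral_congr fun x ↦ (hg_tendsto x).liminf_eq.symm
    _ ≤ liminf (fun n ↦ ∫⁻ x, ENNReal.ofReal (g n x) ∂ν) atTop :=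
      lintegral_liminf_le fun n ↦ (hg n).ennreal_ofReal
    _ = liminf (fun n : ℕ ↦ ENNReal.ofReal (klDual μ ν (truncLLR μ ν n))) atTop := by
      simp only [g, lintegral_truncLLR_eq_klDual hμν (Nat.cast_nonneg _)]
    _ ≤ _ := liminf_le_of_frequently_le' <| .of_forall fun n ↦
      ofReal_klDual_le_iSup (measurable_truncLLR μ ν n) ⟨n, abs_truncLLR_le μ ν n.cast_nonneg⟩

lemma klDual_indicator_const_of_measure_eq_zero {A : Set α} (hA : MeasurableSet A)
    (hνA : ν A = 0) (t : ℝ) : klDual μ ν (A.indicator fun _ ↦ t) = μ.real A * t := by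
  have h_zero : (fun x ↦ Real.exp (A.indicator (fun _ ↦ t) x) - 1) =ᵐ[ν] 0 := by
    filter_upwards [measure_eq_zero_iff_ae_notMem.1 hνA] with x hx
    simp [hx]
  rw [klDual, integral_congr_ae h_zero, integral_indicator_const t hA]
  simp

lemma iSup_klDual_eq_top_of_not_ac [IsFiniteMeasure μ] (hμν : ¬ μ ≪ ν) :
    ⨆ (φ : α → ℝ) (_ : Measurable φ) (_ : ∃ C : ℝ, ∀ x, |φ x| ≤ C),
      ENNReal.ofReal (klDual μ ν φ) = ∞ := by
  obtain ⟨A, hA, hνA, hμA⟩ : ∃ A, MeasurableSet A ∧ ν A = 0 ∧ μ A ≠ 0 := by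
    contrapose! hμν
    exact Measure.AbsolutelyContinuous.mk hμν
  have h_pos : 0 < μ.real A := ENNReal.toReal_pos hμA (measure_ne_top μ A)
  have h_tendsto : Tendsto (fun t ↦ ENNReal.ofReal (μ.real A * t)) atTop (𝓝 ∞) :=
    ENNReal.tendsto_ofReal_atTop.comp (tendsto_id.const_mul_atTop h_pos)
  refine top_unique (le_of_tendsto' h_tendsto fun t ↦ ?_)
  rw [← klDual_indicator_const_of_measure_eq_zero hA hνA t]
  refine ofReal_klDual_le_iSup (measurable_const.indicator hA) ⟨|t|, fun x ↦ ?_⟩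
  by_cases hx : x ∈ A <;> simp [hx]

lemma klDiv_le_iSup_klDual [IsFiniteMeasure μ] [IsFiniteMeasure ν] :
    InformationTheory.klDiv μ ν ≤ ⨆ (φ : α → ℝ) (_ : Measurable φ) (_ : ∃ C : ℝ, ∀ x, |φ x| ≤ C),
      ENNReal.ofReal (klDual μ ν φ) := by
  by_cases hμν : μ ≪ ν
  · exact klDiv_le_iSup_klDual_of_ac hμν
  · exact le_top.trans_eq (iSup_klDual_eq_top_of_not_ac hμν).symm

lemma klDual_le_integral_sub_log_integral_exp [IsProbabilityMeasure ν]
    (hexp : Integrable (fun x ↦ Real.exp (φ x)) ν) :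
    klDual μ ν φ ≤ ∫ x, φ x ∂μ - Real.log (∫ x, Real.exp (φ x) ∂ν) := by
  have h_log := Real.log_le_sub_one_of_pos (integral_exp_pos hexp)
  have h_int : ∫ x, (Real.exp (φ x) - 1) ∂ν = ∫ x, Real.exp (φ x) ∂ν - 1 := by
    simp [integral_sub hexp (integrable_const 1)]
  rw [klDual, h_int]
  linarith

lemma klDual_sub_log_integral_exp [IsProbabilityMeasure μ] [IsProbabilityMeasure ν]
    (hφ : Integrable φ μ) (hexp : Integrable (fun x ↦ Real.exp (φ x)) ν) :
    klDual μ ν (fun x ↦ φ x - Real.log (∫ y, Real.exp (φ y) ∂ν)) =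
      ∫ x, φ x ∂μ - Real.log (∫ x, Real.exp (φ x) ∂ν) := by
  have h_pos := integral_exp_pos hexp
  simp only [klDual, Real.exp_sub, Real.exp_log h_pos]
  rw [integral_sub hφ (integrable_const _), integral_sub (hexp.div_const _) (integrable_const _),
    integral_div, div_self h_pos.ne']
  simp

lemma ofReal_integral_sub_log_integral_exp_le_klDiv [IsProbabilityMeasure μ]
    [IsProbabilityMeasure ν] (hφ : Integrable φ μ)
    (hexp : Integrable (fun x ↦ Real.exp (φ x)) ν) :
    ENNReal.ofReal (∫ x, φ x ∂μ - Real.log (∫ x, Real.exp (φ x) ∂ν)) ≤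
      InformationTheory.klDiv μ ν := by
  rw [← klDual_sub_log_integral_exp hφ hexp]
  refine ofReal_klDual_le_klDiv (hφ.sub (integrable_const _)) ?_
  simpa only [Real.exp_sub] using hexp.div_const _

lemma klDiv_eq_informationTheory_klDiv (h : μ Set.univ = ν Set.univ) :
    klDiv μ ν = InformationTheory.klDiv μ ν := by
  simp [klDiv, InformationTheory.klDiv_def, measureReal_def, h, llr_def]

theorem donsker_varadhan_representation_general
    (μ ν : Measure α) [IsProbabilityMeasure μ] [IsProbabilityMeasure ν] :
    (klDiv μ ν
      = ⨆ (φ : α → ℝ) (_ : Measurable φ) (_ : ∃ C : ℝ, ∀ x, |φ x| ≤ C),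
          ENNReal.ofReal (∫ x, φ x ∂μ - Real.log (∫ y, Real.exp (φ y) ∂ν))) ∧
    (¬ μ ≪ ν → klDiv μ ν = ∞) := by
  have h_exp {φ : α → ℝ} (hφ : Measurable φ) {C : ℝ} (hC : ∀ x, |φ x| ≤ C) :
      Integrable (fun x ↦ Real.exp (φ x)) ν :=
    integrable_exp_of_le hφ.aemeasurable (ae_of_all _ fun x ↦ le_of_abs_le (hC x))
  rw [klDiv_eq_informationTheory_klDiv (by simp)]
  refine ⟨le_antisymm ?_ ?_, InformationTheory.klDiv_of_not_ac⟩
  · refine klDiv_le_iSup_klDual.trans <| iSup_mono fun φ ↦ iSup₂_mono fun hφ ⟨C, hC⟩ ↦ ?_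
    exact ENNReal.ofReal_le_ofReal <| klDual_le_integral_sub_log_integral_exp (h_exp hφ hC)
  · refine iSup_le fun φ ↦ iSup₂_le fun hφ ⟨C, hC⟩ ↦ ?_
    exact ofReal_integral_sub_log_integral_exp_le_klDiv
      (.of_bound hφ.aestronglyMeasurable C (ae_of_all _ hC)) (h_exp hφ hC)

end Duality

/-- **Donsker–Varadhan representation of the KL divergence.** For probability measures
`μ, ν` on `ℝ^d`, as an identity in `[0, +∞]`,
`KL(μ‖ν) = sup { ∫ φ dμ - log ∫ e^φ dν : φ bounded measurable }`;
in particular, when `μ` is not absolutely continuous w.r.t. `ν`, both sides are `+∞`. -/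
theorem donsker_varadhan_representation
    {d : ℕ} (μ ν : Measure (EuclideanSpace ℝ (Fin d)))
    [IsProbabilityMeasure μ] [IsProbabilityMeasure ν] :
    (klDiv μ ν
      = ⨆ (φ : EuclideanSpace ℝ (Fin d) → ℝ)
          (_ : Measurable φ) (_ : ∃ C : ℝ, ∀ x, |φ x| ≤ C),
          ENNReal.ofReal (∫ x, φ x ∂μ - Real.log (∫ y, Real.exp (φ y) ∂ν))) ∧
    (¬ μ ≪ ν → klDiv μ ν = ∞) :=
  donsker_varadhan_representation_general μ ν
end

section
/- Let (H, ‖·‖) be a real normed space, Ψ : ℝ^p → H a map, J : ℝ^p → ℝ a C-Lipschitz function for some C ≥ 0, θ₀ ∈ ℝ^p, c > 0, and τ > 0. Assume the non-degeneracy condition ‖Ψ(θ) − Ψ(θ₀)‖² ≥ c ‖θ − θ₀‖² for all θ ∈ ℝ^p. If θ* minimizes the functional Φ(θ) = (1/2τ) ‖Ψ(θ) − Ψ(θ₀)‖² + J(θ) over ℝ^p, then ‖θ* − θ₀‖ ≤ (2C/c) τ; in particular the parametric JKO increment is O(τ). -/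
open scoped NNReal

/-!
Comparing `Φ(θ*)` with `Φ(θ₀) = J(θ₀)` bounds the penalty `‖Ψ θ* - Ψ θ₀‖²` by `2τ` times the
decrease of `J`, which is at most `C ‖θ* - θ₀‖`. Non-degeneracy bounds the same penalty below by
`c ‖θ* - θ₀‖²`, and one factor `‖θ* - θ₀‖` cancels.
-/

theorem le_div_of_mul_sq_le_mul {K : Type*} [Field K] [LinearOrder K] [IsStrictOrderedRing K]
    {a c r : K} (ha : 0 ≤ a) (hc : 0 < c) (h : c * r ^ 2 ≤ a * r) : r ≤ a / c := by
  rcases le_or_gt r 0 with hr | hr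
  · exact hr.trans (div_nonneg ha hc.le)
  · have hmul : r * c * r ≤ a * r :=
      calc r * c * r = c * r ^ 2 := by ring
        _ ≤ a * r := h
    exact (le_div_iff₀ hc).2 (le_of_mul_le_mul_right hmul hr)

/-- The functional `Φ(θ) = (1/2τ) d(Ψ(θ), Ψ(θ₀))² + J(θ)` minimized by one step, of size `τ` and
starting from `θ₀`, of the parametric JKO scheme. The penalty is a squared distance, so that `Ψ` may
take values in any pseudometric space; in a normed space it is `‖Ψ(θ) - Ψ(θ₀)‖²`. -/
noncomputable def jkoObjective {X Y : Type*} [PseudoMetricSpace Y]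
    (τ : ℝ) (Ψ : X → Y) (J : X → ℝ) (θ₀ θ : X) : ℝ :=
  1 / (2 * τ) * dist (Ψ θ) (Ψ θ₀) ^ 2 + J θ

section

variable {X Y : Type*} [PseudoMetricSpace Y] {τ : ℝ} {Ψ : X → Y} {J : X → ℝ} {θ₀ θ : X}

theorem jkoObjective_self : jkoObjective τ Ψ J θ₀ θ₀ = J θ₀ := by
  simp [jkoObjective]

theorem dist_sq_le_of_jkoObjective_le (hτ : 0 < τ)
    (hle : jkoObjective τ Ψ J θ₀ θ ≤ jkoObjective τ Ψ J θ₀ θ₀) :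
    dist (Ψ θ) (Ψ θ₀) ^ 2 ≤ 2 * τ * (J θ₀ - J θ) := by
  rw [jkoObjective_self, jkoObjective, ← le_sub_iff_add_le, one_div_mul_eq_div] at hle
  exact (div_le_iff₀' (by positivity)).1 hle

theorem parametric_jko_increment_bound_general [PseudoMetricSpace X] {C : ℝ≥0} {c : ℝ}
    (hJ : LipschitzWith C J) (hc : 0 < c) (hτ : 0 < τ)
    (hnd : c * dist θ θ₀ ^ 2 ≤ dist (Ψ θ) (Ψ θ₀) ^ 2)
    (hle : jkoObjective τ Ψ J θ₀ θ ≤ jkoObjective τ Ψ J θ₀ θ₀) :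
    dist θ θ₀ ≤ 2 * C / c * τ := by
  have hdecrease : J θ₀ - J θ ≤ C * dist θ θ₀ := by
    rw [sub_le_iff_le_add', dist_comm]
    exact hJ.le_add_mul θ₀ θ
  have hquad : c * dist θ θ₀ ^ 2 ≤ 2 * C * τ * dist θ θ₀ :=
    calc c * dist θ θ₀ ^ 2 ≤ dist (Ψ θ) (Ψ θ₀) ^ 2 := hnd
      _ ≤ 2 * τ * (J θ₀ - J θ) := dist_sq_le_of_jkoObjective_le hτ hle
      _ ≤ 2 * τ * (C * dist θ θ₀) := by gcongr
      _ = 2 * C * τ * dist θ θ₀ := by ring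
  rw [div_mul_eq_mul_div]
  exact le_div_of_mul_sq_le_mul (by positivity) hc hquad

end

/-- **The parametric JKO increment is `O(τ)`.**
Let `H` be a real normed space, `Ψ : ℝ^p → H`, `J : ℝ^p → ℝ` a `C`-Lipschitz function,
`θ₀ ∈ ℝ^p`, `c > 0`, `τ > 0`.  Under the non-degeneracy condition
`‖Ψ θ - Ψ θ₀‖² ≥ c ‖θ - θ₀‖²`, any minimizer `θ*` of
`Φ(θ) = (1/(2τ)) ‖Ψ θ - Ψ θ₀‖² + J θ` satisfies `‖θ* - θ₀‖ ≤ (2C/c) τ`. -/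
theorem parametric_jko_increment_bound
    {p : ℕ} {H : Type*} [NormedAddCommGroup H]
    (Ψ : EuclideanSpace ℝ (Fin p) → H)
    (J : EuclideanSpace ℝ (Fin p) → ℝ) (C : ℝ≥0) (hJ : LipschitzWith C J)
    (θ₀ : EuclideanSpace ℝ (Fin p)) (c τ : ℝ) (hc : 0 < c) (hτ : 0 < τ)
    (hnd : ∀ θ : EuclideanSpace ℝ (Fin p), c * ‖θ - θ₀‖ ^ 2 ≤ ‖Ψ θ - Ψ θ₀‖ ^ 2)
    (θstar : EuclideanSpace ℝ (Fin p))
    (hmin : ∀ θ : EuclideanSpace ℝ (Fin p),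
      1 / (2 * τ) * ‖Ψ θstar - Ψ θ₀‖ ^ 2 + J θstar
        ≤ 1 / (2 * τ) * ‖Ψ θ - Ψ θ₀‖ ^ 2 + J θ) :
    ‖θstar - θ₀‖ ≤ 2 * C / c * τ := by
  simp only [← dist_eq_norm] at hnd hmin ⊢
  exact parametric_jko_increment_bound_general hJ hc hτ (hnd θstar) (hmin θ₀)
end
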